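/- arXiv:2008.10828 — 3 statements merged into one kernel-verified Lean document; each statement's English description precedes it below -/
import Mathlib

section
/- Let V be a finite set with |V| = n ≥ 2 and symmetric weights C : V × V → [0,1] with C_ii = 0, and let 0 < Δ_min ≤ Δ_max. Let T be a binary hierarchical clustering tree on V such that: (i) for every internal node t of T with leaf set V_t, every i ∈ V_t has Δ_min ≤ Σ_{j ∈ V_t} C_ij ≤ Δ_max; and (ii) at every internal node t, the split of V_t into the leaf sets (A_t, B_t) of its two children satisfies φ_{V_t}(A_t) ≤ (Δ_max/√Δ_min)·√(min_{∅ ≠ S ⊊ V_t} φ_{V_t}(S)) (the quality guarantee that Cheeger's inequality gives for spectral sweep cuts). Then cost_V(T) ≤ Δ_max·√(27/Δ_min)·n·log₂(n)·√(cost_V(T*)), where T* is a tree minimizing cost_V. -/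
open Finset

/-- A rooted binary hierarchical clustering tree with leaves labelled by `α`. -/
inductive HTree (α : Type*) where
  | leaf : α → HTree α
  | node : HTree α → HTree α → HTree α

namespace HTree

variable {α : Type*} [DecidableEq α]

/-- The set of leaf labels of a tree. -/
def leaves : HTree α → Finset α
  | .leaf a => {a}
  | .node l r => leaves l ∪ leaves r

/-- All leaf labels of the tree are pairwise distinct, i.e. the leaves of the two
subtrees of every internal node are disjoint. -/
def distinctLeaves : HTree α → Prop
  | .leaf _ => True
  | .node l r => distinctLeaves l ∧ distinctLeaves r ∧ Disjoint (leaves l) (leaves r)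

/-- `T` is a hierarchical clustering tree on the whole vertex set `V` (= all of `α`):
its leaves are pairwise distinct and are exactly the elements of `V`. -/
def IsTreeOn [Fintype α] (T : HTree α) : Prop :=
  distinctLeaves T ∧ leaves T = Finset.univ

/-- Dasgupta's hierarchical clustering cost
`cost_V(T) = Σ_{unordered pairs {i,j}, i ≠ j} C_ij·|leaves(T[i ∨ j])|`,
written equivalently in recursive form: each internal node `t` splitting into children
with leaf sets `A`, `B` contributes `|leaves(t)| · Σ_{i ∈ A, j ∈ B} C_ij`
(each unordered cross pair `{i,j}` has `t` as its lowest common ancestor and is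
counted exactly once since `A` and `B` are disjoint). -/
noncomputable def cost (C : α → α → ℝ) : HTree α → ℝ
  | .leaf _ => 0
  | .node l r =>
      ((leaves l ∪ leaves r).card : ℝ) * (∑ i ∈ leaves l, ∑ j ∈ leaves r, C i j)
        + cost C l + cost C r

end HTree

/-- The expansion within `W` of a nonempty proper subset `S ⊊ W`:
`φ_W(S) = (Σ_{i ∈ S, j ∈ W∖S} C_ij) / min(|S|, |W∖S|)`. -/
noncomputable def expansionIn {α : Type*} [DecidableEq α]
    (C : α → α → ℝ) (W S : Finset α) : ℝ :=
  (∑ i ∈ S, ∑ j ∈ W \ S, C i j) / min (S.card : ℝ) (((W \ S).card : ℝ))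

/-- The two conditions, at every internal node `t` of the tree with leaf set `V_t`:
(i) every `i ∈ V_t` has degree (within `V_t`) in `[Δ_min, Δ_max]`; and
(ii) the split `(A_t, B_t)` of `V_t` into the leaf sets of the two children satisfies the
spectral sweep-cut guarantee
`φ_{V_t}(A_t) ≤ (Δ_max/√Δ_min)·√(min_{∅ ≠ S ⊊ V_t} φ_{V_t}(S))`,
expressed equivalently as `φ_{V_t}(A_t) ≤ (Δ_max/√Δ_min)·√(φ_{V_t}(S))` for every
nonempty proper `S ⊊ V_t`. -/
def CheegerSplits {α : Type*} [DecidableEq α]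
    (C : α → α → ℝ) (Δmin Δmax : ℝ) : HTree α → Prop
  | .leaf _ => True
  | .node l r =>
      (∀ i ∈ l.leaves ∪ r.leaves,
          Δmin ≤ (∑ j ∈ l.leaves ∪ r.leaves, C i j) ∧
            (∑ j ∈ l.leaves ∪ r.leaves, C i j) ≤ Δmax) ∧
      (∀ S ⊆ l.leaves ∪ r.leaves, S.Nonempty → S ≠ l.leaves ∪ r.leaves →
          expansionIn C (l.leaves ∪ r.leaves) l.leaves
            ≤ (Δmax / Real.sqrt Δmin) * Real.sqrt (expansionIn C (l.leaves ∪ r.leaves) S)) ∧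
      CheegerSplits C Δmin Δmax l ∧ CheegerSplits C Δmin Δmax r

/-!
Let `T'` be any tree whose leaves include a set `W`. Descending in `T'` from the root to the child
that holds more of `W`, the first subtree holding at most `2/3` of `W` still holds at least `1/3` of
it. Every edge cut by separating this subtree has its endpoints joined at a node with more than
`2/3 · |W|` leaves, so the cut has weight at most `3/2 · cost T' / |W|` and expansion at most
`9/2 · cost T' / |W|²`. The Cheeger guarantee therefore bounds the expansion of the split of `W` in
`T` by `K · √(9/2 · cost T') / |W|`: a node splitting `a + b` leaves into `a` and `b` costs at most
`K · √(9/2 · cost T') · min a b`. Summed over the tree, the terms `min a b` amount to at most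
`n log₂ n`.
-/

section CutWeight

variable {α : Type*} {C : α → α → ℝ} {A A' B B' : Finset α}

/-- The total weight `w(A, B)` of the ordered pairs in `A × B`; for disjoint `A` and `B` this is the
weight of the cut between them. -/
def cutWeight (C : α → α → ℝ) (A B : Finset α) : ℝ :=
  ∑ i ∈ A, ∑ j ∈ B, C i j

lemma cutWeight_nonneg (h0 : ∀ i j, 0 ≤ C i j) (A B : Finset α) : 0 ≤ cutWeight C A B :=
  sum_nonneg fun i _ => sum_nonneg fun j _ => h0 i j

lemma cutWeight_comm (hsymm : ∀ i j, C i j = C j i) (A B : Finset α) :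
    cutWeight C A B = cutWeight C B A :=
  sum_comm.trans <| sum_congr rfl fun _ _ => sum_congr rfl fun _ _ => hsymm _ _

lemma cutWeight_mono (h0 : ∀ i j, 0 ≤ C i j) (hA : A ⊆ A') (hB : B ⊆ B') :
    cutWeight C A B ≤ cutWeight C A' B' :=
  calc cutWeight C A B
      ≤ cutWeight C A B' :=
        sum_le_sum fun i _ => sum_le_sum_of_subset_of_nonneg hB fun j _ _ => h0 i j
    _ ≤ cutWeight C A' B' :=
        sum_le_sum_of_subset_of_nonneg hA fun i _ _ => sum_nonneg fun j _ => h0 i j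

variable [DecidableEq α]

lemma cutWeight_union_right_le (h0 : ∀ i j, 0 ≤ C i j) (A B D : Finset α) :
    cutWeight C A (B ∪ D) ≤ cutWeight C A B + cutWeight C A D := by
  simp only [cutWeight, ← sum_add_distrib, ← sum_union_inter (s₁ := B)]
  exact sum_le_sum fun i _ => le_add_of_nonneg_right <| sum_nonneg fun j _ => h0 i j

lemma cutWeight_union_sdiff_le (h0 : ∀ i j, 0 ≤ C i j) (hAB : A ⊆ B) (D : Finset α) :
    cutWeight C A ((B ∪ D) \ A) ≤ cutWeight C A (B \ A) + cutWeight C B D :=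
  calc cutWeight C A ((B ∪ D) \ A)
      ≤ cutWeight C A (B \ A ∪ D) :=
        cutWeight_mono h0 Subset.rfl <| by
          rw [union_sdiff_distrib]
          exact union_subset_union_right sdiff_subset
    _ ≤ cutWeight C A (B \ A) + cutWeight C A D := cutWeight_union_right_le h0 _ _ _
    _ ≤ cutWeight C A (B \ A) + cutWeight C B D := by
        gcongr
        exact cutWeight_mono h0 hAB Subset.rfl

lemma expansionIn_eq (C : α → α → ℝ) (W S : Finset α) :
    expansionIn C W S = cutWeight C S (W \ S) / min (#S : ℝ) #(W \ S) :=
  rfl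

lemma expansionIn_union_left (C : α → α → ℝ) (h : Disjoint A B) :
    expansionIn C (A ∪ B) A = cutWeight C A B / min (#A : ℝ) #B := by
  rw [expansionIn_eq, union_sdiff_cancel_left h]

end CutWeight

namespace HTree

variable {α : Type*} [DecidableEq α] {C : α → α → ℝ} {W : Finset α}

lemma leaves_node (l r : HTree α) : (node l r).leaves = l.leaves ∪ r.leaves :=
  rfl

lemma leaves_node_comm (l r : HTree α) : (node l r).leaves = (node r l).leaves :=
  union_comm _ _

lemma leaves_nonempty : ∀ T : HTree α, T.leaves.Nonempty
  | leaf a => singleton_nonempty a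
  | node l _ => (leaves_nonempty l).inl

lemma cost_node (C : α → α → ℝ) (l r : HTree α) :
    cost C (node l r) =
      #(l.leaves ∪ r.leaves) * cutWeight C l.leaves r.leaves + cost C l + cost C r :=
  rfl

lemma cost_node_comm (hsymm : ∀ i j, C i j = C j i) (l r : HTree α) :
    cost C (node l r) = cost C (node r l) := by
  rw [cost_node, cost_node, cutWeight_comm hsymm, union_comm, add_right_comm]

lemma cost_nonneg (h0 : ∀ i j, 0 ≤ C i j) : ∀ T : HTree α, 0 ≤ cost C T
  | leaf _ => le_rfl
  | node l r =>
    add_nonneg (add_nonneg (mul_nonneg (Nat.cast_nonneg _) (cutWeight_nonneg h0 _ _))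
      (cost_nonneg h0 l)) (cost_nonneg h0 r)

/-- `S` is a union of leaves of `T` holding between one and two thirds of `W`, and cutting it off
from the rest of `T` is cheap relative to the cost of `T`. -/
structure IsBalancedCut (C : α → α → ℝ) (W : Finset α) (T : HTree α) (S : Finset α) : Prop where
  subset_leaves : S ⊆ T.leaves
  card_le : #W ≤ 3 * #(W ∩ S)
  le_card : 3 * #(W ∩ S) ≤ 2 * #W
  cutWeight_le : 2 * #W * cutWeight C S (T.leaves \ S) ≤ 3 * cost C T

lemma two_mul_card_mul_cutWeight_add_le (h0 : ∀ i j, 0 ≤ C i j) {l r : HTree α}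
    (hbig : 2 * #W < 3 * #(W ∩ (node l r).leaves)) :
    2 * #W * cutWeight C l.leaves r.leaves + 3 * cost C l ≤ 3 * cost C (node l r) := by
  have hcard : 2 * #W ≤ 3 * #(l.leaves ∪ r.leaves) :=
    hbig.le.trans <| Nat.mul_le_mul_left 3 <| card_le_card inter_subset_right
  have hmul : 2 * #W * cutWeight C l.leaves r.leaves
      ≤ 3 * #(l.leaves ∪ r.leaves) * cutWeight C l.leaves r.leaves :=
    mul_le_mul_of_nonneg_right (mod_cast hcard) (cutWeight_nonneg h0 _ _)
  linarith [cost_node C l r, cost_nonneg h0 r]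

lemma IsBalancedCut.node_left (h0 : ∀ i j, 0 ≤ C i j) {l r : HTree α} {S : Finset α}
    (hS : IsBalancedCut C W l S) (hbig : 2 * #W < 3 * #(W ∩ (node l r).leaves)) :
    IsBalancedCut C W (node l r) S where
  subset_leaves := hS.subset_leaves.trans subset_union_left
  card_le := hS.card_le
  le_card := hS.le_card
  cutWeight_le :=
    calc 2 * #W * cutWeight C S ((l.leaves ∪ r.leaves) \ S)
        ≤ 2 * #W * (cutWeight C S (l.leaves \ S) + cutWeight C l.leaves r.leaves) := by
          gcongr
          exact cutWeight_union_sdiff_le h0 hS.subset_leaves _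
      _ ≤ 3 * cost C (node l r) := by
          linarith [hS.cutWeight_le, two_mul_card_mul_cutWeight_add_le h0 hbig]

lemma isBalancedCut_leaves_left (h0 : ∀ i j, 0 ≤ C i j) {l r : HTree α}
    (hbig : 2 * #W < 3 * #(W ∩ (node l r).leaves)) (hlr : #(W ∩ r.leaves) ≤ #(W ∩ l.leaves))
    (hl : 3 * #(W ∩ l.leaves) ≤ 2 * #W) :
    IsBalancedCut C W (node l r) l.leaves where
  subset_leaves := subset_union_left
  card_le := by
    have hunion : #(W ∩ (node l r).leaves) ≤ #(W ∩ l.leaves) + #(W ∩ r.leaves) := by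
      rw [leaves_node, inter_union_distrib_left]
      exact card_union_le _ _
    omega
  le_card := hl
  cutWeight_le :=
    calc 2 * #W * cutWeight C l.leaves ((l.leaves ∪ r.leaves) \ l.leaves)
        ≤ 2 * #W * cutWeight C l.leaves r.leaves := by
          gcongr
          exact cutWeight_mono h0 Subset.rfl (by simp [union_sdiff_left])
      _ ≤ 3 * cost C (node l r) := by
          linarith [cost_nonneg h0 l, two_mul_card_mul_cutWeight_add_le h0 hbig]

lemma exists_isBalancedCut (hsymm : ∀ i j, C i j = C j i) (h0 : ∀ i j, 0 ≤ C i j)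
    (hW : 2 ≤ #W) (T : HTree α) (hbig : 2 * #W < 3 * #(W ∩ T.leaves)) :
    ∃ S, IsBalancedCut C W T S := by
  induction T with
  | leaf a =>
    have hle : #(W ∩ (leaf a).leaves) ≤ 1 := card_le_card inter_subset_right
    omega
  | node l r ihl ihr =>
    wlog hlr : #(W ∩ r.leaves) ≤ #(W ∩ l.leaves) generalizing l r
    · obtain ⟨S, hS⟩ := this r l ihr ihl (leaves_node_comm l r ▸ hbig) (le_of_not_ge hlr)
      exact ⟨S, leaves_node_comm r l ▸ hS.subset_leaves, hS.card_le, hS.le_card,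
        leaves_node_comm r l ▸ cost_node_comm hsymm r l ▸ hS.cutWeight_le⟩
    obtain hl | hl := lt_or_ge (2 * #W) (3 * #(W ∩ l.leaves))
    · obtain ⟨S, hS⟩ := ihl hl
      exact ⟨S, hS.node_left h0 hbig⟩
    · exact ⟨l.leaves, isBalancedCut_leaves_left h0 hbig hlr hl⟩

lemma IsBalancedCut.sq_card_mul_expansionIn_le (h0 : ∀ i j, 0 ≤ C i j) {T : HTree α}
    {S : Finset α} (hS : IsBalancedCut C W T S) (hW : W.Nonempty) (hWT : W ⊆ T.leaves) :
    (#W : ℝ) ^ 2 * expansionIn C W (W ∩ S) ≤ 9 / 2 * cost C T := by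
  have : (0 : ℝ) < #W := mod_cast hW.card_pos
  have hmin : (#W : ℝ) / 3 ≤ min (#(W ∩ S) : ℝ) #(W \ (W ∩ S)) := by
    have hsplit := card_sdiff_add_card_eq_card (inter_subset_left : W ∩ S ⊆ W)
    have hle_inter : (#W : ℝ) ≤ 3 * #(W ∩ S) := mod_cast hS.card_le
    have hle_sdiff : (#W : ℝ) ≤ 3 * #(W \ (W ∩ S)) := by
      have := hS.le_card
      exact_mod_cast (by omega : #W ≤ 3 * #(W \ (W ∩ S)))
    apply le_min <;> linarith
  have hcut : cutWeight C (W ∩ S) (W \ (W ∩ S)) ≤ cutWeight C S (T.leaves \ S) := by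
    rw [sdiff_inter_self_left]
    exact cutWeight_mono h0 inter_subset_right (sdiff_subset_sdiff hWT Subset.rfl)
  calc (#W : ℝ) ^ 2 * expansionIn C W (W ∩ S)
      ≤ (#W : ℝ) ^ 2 * (cutWeight C S (T.leaves \ S) / (#W / 3)) := by
        rw [expansionIn_eq]
        have := cutWeight_nonneg h0 S (T.leaves \ S)
        gcongr
    _ = 3 / 2 * (2 * #W * cutWeight C S (T.leaves \ S)) := by
        field_simp
    _ ≤ 9 / 2 * cost C T := by linarith [hS.cutWeight_le]

lemma exists_sq_card_mul_expansionIn_le (hsymm : ∀ i j, C i j = C j i) (h0 : ∀ i j, 0 ≤ C i j)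
    (hW : 2 ≤ #W) {T : HTree α} (hWT : W ⊆ T.leaves) :
    ∃ S ⊆ W, S.Nonempty ∧ S ≠ W ∧ (#W : ℝ) ^ 2 * expansionIn C W S ≤ 9 / 2 * cost C T := by
  obtain ⟨S, hS⟩ := exists_isBalancedCut hsymm h0 hW T (by rw [inter_eq_left.mpr hWT]; omega)
  have hcard := hS.card_le
  have hcard' := hS.le_card
  refine ⟨W ∩ S, inter_subset_left, card_pos.mp (by omega), fun h => ?_,
    hS.sq_card_mul_expansionIn_le h0 (card_pos.mp (by omega)) hWT⟩
  rw [h] at hcard'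
  omega

/-- `P W A` holds at every internal node of the tree, where `W` is the leaf set of the node and `A`
that of its left child. -/
def ForallSplits (P : Finset α → Finset α → Prop) : HTree α → Prop
  | leaf _ => True
  | node l r => P (l.leaves ∪ r.leaves) l.leaves ∧ ForallSplits P l ∧ ForallSplits P r

lemma ForallSplits.imp {P Q : Finset α → Finset α → Prop} {T : HTree α}
    (hP : T.ForallSplits P) (hT : T.distinctLeaves)
    (h : ∀ W A, W ⊆ T.leaves → A.Nonempty → A ⊂ W → P W A → Q W A) : T.ForallSplits Q := by
  induction T with
  | leaf a => trivial
  | node l r ihl ihr =>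
    obtain ⟨hPnode, hPl, hPr⟩ := hP
    obtain ⟨hl, hr, hdisj⟩ := hT
    have hss : l.leaves ⊂ l.leaves ∪ r.leaves :=
      left_lt_sup.mpr fun hle => r.leaves_nonempty.ne_empty (hdisj.eq_bot_of_ge hle)
    exact ⟨h _ _ Subset.rfl l.leaves_nonempty hss hPnode,
      ihl hPl hl fun W A hW => h W A (hW.trans subset_union_left),
      ihr hPr hr fun W A hW => h W A (hW.trans subset_union_right)⟩

end HTree

lemma mul_logb_two_add_le_of_le {a b : ℝ} (ha : 0 < a) (hab : a ≤ b) :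
    a * Real.logb 2 a + b * Real.logb 2 b + a ≤ (a + b) * Real.logb 2 (a + b) := by
  have hdouble : Real.logb 2 a + 1 ≤ Real.logb 2 (a + b) :=
    calc Real.logb 2 a + 1
        = Real.logb 2 (a * 2) := by
          rw [Real.logb_mul ha.ne' two_ne_zero, Real.logb_self_eq_one one_lt_two]
      _ ≤ Real.logb 2 (a + b) :=
          Real.logb_le_logb_of_le one_lt_two (by positivity) (by linarith)
  have hmono : Real.logb 2 b ≤ Real.logb 2 (a + b) :=
    Real.logb_le_logb_of_le one_lt_two (ha.trans_le hab) (by linarith)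
  calc a * Real.logb 2 a + b * Real.logb 2 b + a
      = a * (Real.logb 2 a + 1) + b * Real.logb 2 b := by ring
    _ ≤ a * Real.logb 2 (a + b) + b * Real.logb 2 (a + b) := by gcongr; linarith
    _ = (a + b) * Real.logb 2 (a + b) := by ring

lemma mul_logb_two_add_min_le {a b : ℝ} (ha : 0 < a) (hb : 0 < b) :
    a * Real.logb 2 a + b * Real.logb 2 b + min a b ≤ (a + b) * Real.logb 2 (a + b) := by
  wlog hab : a ≤ b generalizing a b
  · rw [add_comm (a * _), min_comm, add_comm a b]
    exact this hb ha (le_of_not_ge hab)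
  rw [min_eq_left hab]
  exact mul_logb_two_add_le_of_le ha hab

section CheegerCut

variable {α : Type*} [DecidableEq α] {C : α → α → ℝ} {K M : ℝ}

lemma HTree.cost_le_of_forallSplits (hM : 0 ≤ M) {T : HTree α} (hT : T.distinctLeaves)
    (hsplits : T.ForallSplits fun W A => #W * expansionIn C W A ≤ M) :
    cost C T ≤ M * (#T.leaves * Real.logb 2 #T.leaves) := by
  induction T with
  | leaf a => simp [cost, leaves]
  | node l r ihl ihr =>
    obtain ⟨hl, hr, hdisj⟩ := hT
    obtain ⟨hnode, hsl, hsr⟩ := hsplits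
    have hlpos : (0 : ℝ) < #l.leaves := mod_cast l.leaves_nonempty.card_pos
    have hrpos : (0 : ℝ) < #r.leaves := mod_cast r.leaves_nonempty.card_pos
    have hcut : #(l.leaves ∪ r.leaves) * cutWeight C l.leaves r.leaves
        ≤ M * min (#l.leaves : ℝ) #r.leaves := by
      rwa [expansionIn_union_left C hdisj, ← mul_div_assoc, div_le_iff₀ (lt_min hlpos hrpos)]
        at hnode
    calc cost C (node l r)
        ≤ M * min (#l.leaves : ℝ) #r.leaves + M * (#l.leaves * Real.logb 2 #l.leaves)
            + M * (#r.leaves * Real.logb 2 #r.leaves) :=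
          add_le_add (add_le_add hcut (ihl hl hsl)) (ihr hr hsr)
      _ = M * (#l.leaves * Real.logb 2 #l.leaves + #r.leaves * Real.logb 2 #r.leaves
            + min (#l.leaves : ℝ) #r.leaves) := by ring
      _ ≤ M * ((#l.leaves + #r.leaves) * Real.logb 2 (#l.leaves + #r.leaves)) :=
          mul_le_mul_of_nonneg_left (mul_logb_two_add_min_le hlpos hrpos) hM
      _ = M * (#(node l r).leaves * Real.logb 2 #(node l r).leaves) := by
          rw [leaves_node, card_union_of_disjoint hdisj, Nat.cast_add]

/-- The cut of `W` into `A` and `W \ A` meets the guarantee `φ_W(A) ≤ K · √(min_S φ_W(S))`, the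
minimum over nonempty proper `S ⊂ W` being expressed by quantifying over all such `S`. -/
def IsCheegerCut (C : α → α → ℝ) (K : ℝ) (W A : Finset α) : Prop :=
  ∀ S ⊆ W, S.Nonempty → S ≠ W → expansionIn C W A ≤ K * √(expansionIn C W S)

lemma CheegerSplits.forallSplits_isCheegerCut {Δmin Δmax : ℝ} {T : HTree α}
    (h : CheegerSplits C Δmin Δmax T) : T.ForallSplits (IsCheegerCut C (Δmax / √Δmin)) := by
  induction T with
  | leaf a => trivial
  | node l r ihl ihr =>
    obtain ⟨-, hcut, hl, hr⟩ := h
    exact ⟨hcut, ihl hl, ihr hr⟩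

lemma IsCheegerCut.card_mul_expansionIn_le (hsymm : ∀ i j, C i j = C j i)
    (h0 : ∀ i j, 0 ≤ C i j) (hK : 0 ≤ K) {W A : Finset α} (hA : IsCheegerCut C K W A)
    (hW : 2 ≤ #W) {T : HTree α} (hWT : W ⊆ T.leaves) :
    #W * expansionIn C W A ≤ K * √(9 / 2 * T.cost C) := by
  obtain ⟨S, hSW, hSne, hSproper, hS⟩ :=
    HTree.exists_sq_card_mul_expansionIn_le hsymm h0 hW hWT
  calc #W * expansionIn C W A
      ≤ #W * (K * √(expansionIn C W S)) := by
        gcongr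
        exact hA S hSW hSne hSproper
    _ = K * √((#W : ℝ) ^ 2 * expansionIn C W S) := by
        rw [Real.sqrt_mul (sq_nonneg _), Real.sqrt_sq (Nat.cast_nonneg _), mul_left_comm]
    _ ≤ K * √(9 / 2 * T.cost C) := by gcongr

theorem cost_spectral_split_bound_general (hsymm : ∀ i j, C i j = C j i)
    (h0 : ∀ i j, 0 ≤ C i j) (hK : 0 ≤ K) {T T' : HTree α} (hT : T.distinctLeaves)
    (hsplits : T.ForallSplits (IsCheegerCut C K)) (hTT' : T.leaves ⊆ T'.leaves) :
    T.cost C ≤ K * √(9 / 2) * #T.leaves * Real.logb 2 #T.leaves * √(T'.cost C) := by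
  suffices hcost : T.cost C ≤ K * √(9 / 2 * T'.cost C) * (#T.leaves * Real.logb 2 #T.leaves) by
    rw [Real.sqrt_mul (by norm_num)] at hcost
    linarith
  refine HTree.cost_le_of_forallSplits (by positivity) hT <|
    hsplits.imp hT fun W A hW hA hAW hcut => ?_
  have hWcard : 2 ≤ #W := (Nat.succ_le_succ hA.card_pos).trans (card_lt_card hAW)
  exact hcut.card_mul_expansionIn_le hsymm h0 hK hWcard (hW.trans hTT')

end CheegerCut

/-- if `T` is a binary hierarchical clustering tree on `V` (`|V| = n ≥ 2`)
whose every internal node has degrees within `[Δ_min, Δ_max]` and whose every split meets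
the Cheeger sweep-cut quality guarantee, then
`cost_V(T) ≤ Δ_max·√(27/Δ_min)·n·log₂(n)·√(cost_V(T*))`
where `T*` minimizes `cost_V`. -/
theorem cost_spectral_split_bound {α : Type*} [Fintype α] [DecidableEq α]
    (n : ℕ) (hn : 2 ≤ n) (hcard : Fintype.card α = n)
    (C : α → α → ℝ)
    (hsymm : ∀ i j, C i j = C j i)
    (h0 : ∀ i j, 0 ≤ C i j) (h1 : ∀ i j, C i j ≤ 1)
    (hdiag : ∀ i, C i i = 0)
    (Δmin Δmax : ℝ) (hΔmin : 0 < Δmin) (hΔ : Δmin ≤ Δmax)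
    (T : HTree α) (hT : T.IsTreeOn) (hsplits : CheegerSplits C Δmin Δmax T)
    (Tstar : HTree α) (hTstar : Tstar.IsTreeOn)
    (hmin : ∀ T' : HTree α, T'.IsTreeOn → HTree.cost C Tstar ≤ HTree.cost C T') :
    HTree.cost C T
      ≤ Δmax * Real.sqrt (27 / Δmin) * (n : ℝ) * Real.logb 2 (n : ℝ)
          * Real.sqrt (HTree.cost C Tstar) := by
  have hΔmax : 0 ≤ Δmax := hΔmin.le.trans hΔ
  have hbound := cost_spectral_split_bound_general hsymm h0
    (div_nonneg hΔmax (Real.sqrt_nonneg Δmin)) hT.1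
    hsplits.forallSplits_isCheegerCut (hTstar.2 ▸ subset_univ T.leaves)
  rw [div_mul_eq_mul_div, mul_div_assoc, ← Real.sqrt_div (by norm_num), hT.2, card_univ, hcard]
    at hbound
  have hlog : 0 ≤ Real.logb 2 n := Real.logb_nonneg one_lt_two (by norm_cast; omega)
  exact hbound.trans (by gcongr; norm_num)
end

section
/- Every binary hierarchical clustering tree T on a set V of n ≥ 1 elements with unit weights (C_ij = 1 for all i ≠ j, C_ii = 0) has cost_V(T) = (n³ − n)/3; in particular all binary trees on the unit-weight n-clique have the same cost. -/
open Finset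

/-!
An internal node whose children have `a` and `b` leaves contributes `a b (a + b)` to the cost of a
unit-weight clique. Since `(a + b)³ = a³ + b³ + 3 a b (a + b)`, this is exactly the defect of
additivity of `m ↦ (m³ - m) / 3`, a function vanishing at `m = 1`. Hence the contributions telescope
along the tree, whatever its shape.
-/

namespace HTree

variable {α : Type*} [DecidableEq α] {C : α → α → ℝ} {c : ℝ}

theorem cost_node_of_cross_weight_eq {l r : HTree α} (hlr : Disjoint l.leaves r.leaves)
    (hC : ∀ i ∈ l.leaves, ∀ j ∈ r.leaves, C i j = c) :
    cost C (node l r) =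
      c * (#l.leaves * #r.leaves * (#l.leaves + #r.leaves)) + cost C l + cost C r := by
  have cross_sum : ∑ i ∈ l.leaves, ∑ j ∈ r.leaves, C i j = #l.leaves • #r.leaves • c :=
    sum_eq_card_nsmul fun i hi ↦ sum_eq_card_nsmul fun j hj ↦ hC i hi j hj
  rw [cost, cross_sum, card_union_of_disjoint hlr]
  simp only [nsmul_eq_mul, Nat.cast_add]
  ring

end HTree

theorem cost_unit_clique_general {α : Type*} [DecidableEq α] {C : α → α → ℝ} {c : ℝ}
    {T : HTree α} (hT : T.distinctLeaves)
    (hC : (T.leaves : Set α).Pairwise fun i j ↦ C i j = c) :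
    HTree.cost C T = c * (((#T.leaves : ℝ) ^ 3 - #T.leaves) / 3) := by
  induction T with
  | leaf a => simp [HTree.cost, HTree.leaves]
  | node l r ihl ihr =>
    obtain ⟨hl, hr, hlr⟩ := hT
    rw [HTree.leaves, coe_union] at hC
    have cross_weight : ∀ i ∈ l.leaves, ∀ j ∈ r.leaves, C i j = c := fun i hi j hj ↦
      hC (.inl hi) (.inr hj) (disjoint_left.mp hlr hi <| · ▸ hj)
    rw [HTree.cost_node_of_cross_weight_eq hlr cross_weight,
      ihl hl (hC.mono Set.subset_union_left), ihr hr (hC.mono Set.subset_union_right),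
      HTree.leaves, card_union_of_disjoint hlr, Nat.cast_add]
    ring

/-- every binary hierarchical clustering tree on a unit-weight `n`-clique
(`n ≥ 1`) has cost `(n³ − n)/3`; in particular all binary trees on the unit-weight
`n`-clique have the same cost. -/
theorem cost_unit_clique {α : Type*} [Fintype α] [DecidableEq α]
    (n : ℕ) (hn : 1 ≤ n) (hcard : Fintype.card α = n)
    (C : α → α → ℝ) (hC : ∀ i j, C i j = if i = j then 0 else 1)
    (T : HTree α) (hT : T.IsTreeOn) :
    HTree.cost C T = ((n : ℝ)^3 - n) / 3 ∧
      ∀ T' : HTree α, T'.IsTreeOn → HTree.cost C T' = HTree.cost C T := by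
  have cost_eq (S : HTree α) (hS : S.IsTreeOn) : HTree.cost C S = ((n : ℝ) ^ 3 - n) / 3 := by
    simpa [hS.2, hcard] using
      cost_unit_clique_general hS.1 fun i _ j _ hij ↦ (hC i j).trans (if_neg hij)
  exact ⟨cost_eq T hT, fun T' hT' ↦ (cost_eq T' hT').trans (cost_eq T hT).symm⟩
end

section
/- Let n ≥ 2 be even, let V be a set of n elements partitioned into P₁ and P₂ with |P₁| = |P₂| = n/2, let p, q ≥ 0, and define weights C_ij = p if i ≠ j lie in the same part, C_ij = q if they lie in different parts, and C_ii = 0. Then every binary hierarchical clustering tree T₀ on V whose root split is exactly (P₁, P₂) satisfies cost_V(T₀) = q·n³/4 + (2p/3)·(n³/8 − n/2). -/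
open Finset

/-!
Under constant weights `p`, a split into parts of sizes `a` and `b` costs `p * a * b * (a + b)`.
Since `(a + b)³ - (a + b) = (a³ - a) + (b³ - b) + 3 * a * b * (a + b)`, induction on the tree shows
that every tree with `m` leaves costs `p / 3 * (m³ - m)`, whatever its shape. A tree that splits off
the parts of a planted partition at its root therefore costs `q * a * b * (a + b)` there, plus the
constant-weight costs of the two parts.
-/

namespace HTree

variable {α : Type*} [DecidableEq α] {C : α → α → ℝ} {L R : HTree α}

theorem cost_node_of_const_across {q : ℝ} (hdisj : Disjoint L.leaves R.leaves)
    (hacross : ∀ i ∈ L.leaves, ∀ j ∈ R.leaves, C i j = q) :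
    (node L R).cost C =
      q * #L.leaves * #R.leaves * (#L.leaves + #R.leaves) + L.cost C + R.cost C := by
  have hcut : ∑ i ∈ L.leaves, ∑ j ∈ R.leaves, C i j = #L.leaves * (#R.leaves * q) := by
    rw [sum_congr rfl fun i hi ↦ sum_congr rfl (hacross i hi)]
    simp only [sum_const, nsmul_eq_mul]
  rw [cost, hcut, card_union_of_disjoint hdisj]
  push_cast
  ring

theorem cost_of_pairwise_const {p : ℝ} {T : HTree α} (hT : T.distinctLeaves)
    (hC : (T.leaves : Set α).Pairwise fun i j ↦ C i j = p) :
    T.cost C = p / 3 * ((#T.leaves : ℝ) ^ 3 - #T.leaves) := by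
  induction T with
  | leaf a => simp [cost, leaves]
  | node L R ihL ihR =>
    obtain ⟨hL, hR, hdisj⟩ := hT
    rw [leaves, coe_union] at hC
    have hacross : ∀ i ∈ L.leaves, ∀ j ∈ R.leaves, C i j = p := fun i hi j hj ↦
      hC (.inl hi) (.inr hj) (disjoint_iff_ne.mp hdisj i hi j hj)
    rw [cost_node_of_const_across hdisj hacross, ihL hL (hC.mono Set.subset_union_left),
      ihR hR (hC.mono Set.subset_union_right), leaves, card_union_of_disjoint hdisj]
    push_cast
    ring

theorem cost_node_of_const_within_of_const_across {p₁ p₂ q : ℝ} (hT : (node L R).distinctLeaves)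
    (hL : (L.leaves : Set α).Pairwise fun i j ↦ C i j = p₁)
    (hR : (R.leaves : Set α).Pairwise fun i j ↦ C i j = p₂)
    (hacross : ∀ i ∈ L.leaves, ∀ j ∈ R.leaves, C i j = q) :
    (node L R).cost C =
      q * #L.leaves * #R.leaves * (#L.leaves + #R.leaves)
        + p₁ / 3 * ((#L.leaves : ℝ) ^ 3 - #L.leaves)
        + p₂ / 3 * ((#R.leaves : ℝ) ^ 3 - #R.leaves) := by
  obtain ⟨hLdistinct, hRdistinct, hdisj⟩ := hT
  rw [cost_node_of_const_across hdisj hacross, cost_of_pairwise_const hLdistinct hL,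
    cost_of_pairwise_const hRdistinct hR]

end HTree

theorem cost_planted_partition_root_split_general {α : Type*} [DecidableEq α]
    {p q : ℝ} {C : α → α → ℝ} {L R : HTree α} (hT : (HTree.node L R).distinctLeaves)
    (hC : ((HTree.node L R).leaves : Set α).Pairwise fun i j ↦
      C i j = if (i ∈ L.leaves ↔ j ∈ L.leaves) then p else q) :
    (HTree.node L R).cost C =
      q * #L.leaves * #R.leaves * (#L.leaves + #R.leaves)
        + p / 3 * ((#L.leaves : ℝ) ^ 3 - #L.leaves)
        + p / 3 * ((#R.leaves : ℝ) ^ 3 - #R.leaves) := by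
  have hdisj : Disjoint L.leaves R.leaves := hT.2.2
  have notMem_left {j : α} (hj : j ∈ R.leaves) : j ∉ L.leaves := disjoint_right.mp hdisj hj
  rw [HTree.leaves, coe_union] at hC
  refine HTree.cost_node_of_const_within_of_const_across hT ?_ ?_ ?_
  · intro i hi j hj hij
    exact (hC (.inl hi) (.inl hj) hij).trans (if_pos (iff_of_true hi hj))
  · intro i hi j hj hij
    exact (hC (.inr hi) (.inr hj) hij).trans
      (if_pos (iff_of_false (notMem_left hi) (notMem_left hj)))
  · intro i hi j hj
    exact (hC (.inl hi) (.inr hj) (disjoint_iff_ne.mp hdisj i hi j hj)).trans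
      (if_neg fun h ↦ notMem_left hj (h.mp hi))

/-- for the `(n,p,q)`-planted partition weights on `V` with parts `P₁`, `P₂ = P₁ᶜ`
of size `n/2` each, every binary hierarchical clustering tree whose root split is exactly
`(P₁, P₂)` has cost `q·n³/4 + (2p/3)·(n³/8 − n/2)`. -/
theorem cost_planted_partition_root_split {α : Type*} [Fintype α] [DecidableEq α]
    (n : ℕ) (hn : 2 ≤ n) (hcard : Fintype.card α = n)
    (P₁ : Finset α) (hP₁ : 2 * P₁.card = n)
    (p q : ℝ) (hp : 0 ≤ p) (hq : 0 ≤ q)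
    (C : α → α → ℝ)
    (hC : ∀ i j, C i j = if i = j then 0 else if (i ∈ P₁ ↔ j ∈ P₁) then p else q)
    (L R : HTree α) (hTree : (HTree.node L R).IsTreeOn)
    (hL : L.leaves = P₁) (hR : R.leaves = P₁ᶜ) :
    HTree.cost C (HTree.node L R)
      = q * (n : ℝ)^3 / 4 + (2 * p / 3) * ((n : ℝ)^3 / 8 - (n : ℝ) / 2) := by
  subst hL
  have hcardR : #R.leaves = #L.leaves := by rw [hR, card_compl]; omega
  rw [cost_planted_partition_root_split_general hTree.1 fun i _ j _ hij ↦
    (hC i j).trans (if_neg hij), hcardR, ← hP₁]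
  push_cast
  ring
end
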